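/- For every m ≥ 2 there exist constants 0 < c ≤ C depending only on m such that for all x, y > 1 and t > 0 with xy < t, x² ≤ m·t and y² ≤ m·t, one has c·(ln x · ln y / ln²(3t))·p(t,x,y) ≤ p₁(t,x,y) ≤ C·(ln x · ln y / ln²(3t))·p(t,x,y). -/

import Mathlib

open Real MeasureTheory

/-- Modified Bessel function of the first kind, order 0. -/
noncomputable def I0 (z : ℝ) : ℝ := ∑' n : ℕ, (z/2)^(2*n) / ((n.factorial : ℝ))^2

/-- Modified Bessel function of the first kind, order 1. -/
noncomputable def I1 (z : ℝ) : ℝ :=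
  ∑' n : ℕ, (z/2)^(2*n+1) / ((n.factorial : ℝ) * ((n+1).factorial : ℝ))

/-- Heat kernel of the Bessel operator `d²/dx² + (1/x) d/dx` on `(0,∞)`
with respect to the measure `y dy`. -/
noncomputable def pk (t x y : ℝ) : ℝ :=
  t⁻¹ * Real.exp (-(x^2 + y^2)/(2*t)) * I0 (x*y/t)

/-- The function `h` from (AC): Dirichlet heat kernel of `(1/2) d²/dx²` on `(1,∞)`
multiplied by `(xy)⁻¹`. -/
noncomputable def hker (t x y : ℝ) : ℝ :=
  (2*Real.pi*t)^(-(1:ℝ)/2) * (x*y)⁻¹ *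
    (Real.exp (-(x-y)^2/(2*t)) - Real.exp (-(x+y-2)^2/(2*t)))

/-- Bundled hypotheses on the Dirichlet heat kernel `p₁` of the Bessel operator on
`(1,∞)` and on the density `q` of the first hitting time of `1` by the
2-dimensional Bessel process. -/
structure BesselHK (p₁ : ℝ → ℝ → ℝ → ℝ) (q : ℝ → ℝ → ℝ) : Prop where
  meas_p₁ : Measurable fun z : ℝ × ℝ × ℝ => p₁ z.1 z.2.1 z.2.2
  meas_q : Measurable fun z : ℝ × ℝ => q z.1 z.2
  p₁_nonneg : ∀ ⦃t x y : ℝ⦄, 0 < t → 1 < x → 1 < y → 0 ≤ p₁ t x y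
  q_nonneg : ∀ ⦃x s : ℝ⦄, 1 < x → 0 < s → 0 ≤ q x s
  hunt : ∀ ⦃t x y : ℝ⦄, 0 < t → 1 < x → 1 < y →
    p₁ t x y = pk t x y - ∫ u in Set.Ioo 0 t, q x u * pk (t-u) 1 y
  symm : ∀ ⦃t x y : ℝ⦄, 0 < t → 1 < x → 1 < y → p₁ t x y = p₁ t y x
  ck : ∀ ⦃t s x y : ℝ⦄, 0 < t → 0 < s → 1 < x → 1 < y →
    p₁ (t+s) x y = ∫ w in Set.Ioi (1:ℝ), p₁ t x w * p₁ s w y * w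
  mass : ∀ ⦃t x : ℝ⦄, 0 < t → 1 < x →
    (∫ y in Set.Ioi (1:ℝ), p₁ t x y * y) = ∫ u in Set.Ioi t, q x u
  q1 : ∃ c C : ℝ, 0 < c ∧ c ≤ C ∧ ∀ ⦃x s : ℝ⦄, 1 < x → 0 < s →
    ((s < 2*x →
      c * (((x-1)/Real.sqrt x) * s^(-(3:ℝ)/2) * Real.exp (-(x-1)^2/(2*s))) ≤ q x s ∧
      q x s ≤ C * (((x-1)/Real.sqrt x) * s^(-(3:ℝ)/2) * Real.exp (-(x-1)^2/(2*s)))) ∧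
     (2*x ≤ s →
      c * (((x-1)/x) * ((1+Real.log x)/((1+Real.log (s+x))*(1+Real.log (1+s/x)))) *
        s⁻¹ * Real.exp (-(x-1)^2/(2*s))) ≤ q x s ∧
      q x s ≤ C * (((x-1)/x) * ((1+Real.log x)/((1+Real.log (s+x))*(1+Real.log (1+s/x)))) *
        s⁻¹ * Real.exp (-(x-1)^2/(2*s)))))
  q2 : ∀ ⦃x s : ℝ⦄, 1 < x → 0 < s →
    ((x-1)/Real.sqrt (2*Real.pi*x)) * s^(-(3:ℝ)/2) * Real.exp (-(x-1)^2/(2*s)) ≤ q x s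
  surv : ∃ c' C' : ℝ, 0 < c' ∧ c' ≤ C' ∧ ∀ ⦃t x : ℝ⦄, 0 < t → 1 < x →
    c' * min 1 (Real.log x / Real.log (1+Real.sqrt t)) ≤ (∫ u in Set.Ioi t, q x u) ∧
    (∫ u in Set.Ioi t, q x u) ≤ C' * min 1 (Real.log x / Real.log (1+Real.sqrt t))
  ac : ∀ ⦃t x y : ℝ⦄, 0 < t → 1 < x → 1 < y →
    Real.sqrt (x*y) * hker t x y ≤ p₁ t x y ∧
    p₁ t x y ≤ Real.exp (t/8) * Real.sqrt (x*y) * hker t x y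

theorem I0_term_le (z : ℝ) (hz : 0 ≤ z) (n : ℕ) :
    (z/2)^(2*n) / ((n.factorial : ℝ))^2 ≤ z^(2*n) / ((2*n).factorial : ℝ) := by
  have h1 : ((2*n).factorial : ℝ) ≤ 4^n * ((n.factorial : ℝ))^2 := by
    have h := Nat.choose_mul_factorial_mul_factorial (show n ≤ 2*n by omega)
    have h2 : (2*n).choose n ≤ 4^n := by
      have := Nat.choose_le_two_pow (2*n) n
      rwa [pow_mul] at this
    have h3 : (2*n - n) = n := by omega
    rw [h3] at h
    have h4 : (2*n).factorial ≤ 4^n * (n.factorial)^2 := by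
      rw [← h, mul_assoc, ← sq]
      exact Nat.mul_le_mul_right _ h2
    exact_mod_cast h4
  have h5 : (z/2)^(2*n) = z^(2*n) / 4^n := by
    rw [div_pow, pow_mul 2]; norm_num
  rw [h5, div_div]
  apply div_le_div_of_nonneg_left (by positivity) (by positivity) h1

theorem I0_summable (z : ℝ) (hz : 0 ≤ z) :
    Summable fun n : ℕ => (z/2)^(2*n) / ((n.factorial : ℝ))^2 :=
  Summable.of_nonneg_of_le (fun n => by positivity) (I0_term_le z hz)
    (Real.hasSum_cosh z).summable

theorem I0_le (z : ℝ) (hz : 0 ≤ z) : I0 z ≤ Real.exp z := by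
  have h : I0 z ≤ Real.cosh z := by
    rw [Real.cosh_eq_tsum]
    exact (I0_summable z hz).tsum_le_tsum (I0_term_le z hz) (Real.hasSum_cosh z).summable
  have : Real.cosh z ≤ Real.exp z := by
    rw [Real.cosh_eq]
    have := Real.exp_le_exp.2 (show -z ≤ z by linarith)
    linarith
  linarith

theorem one_le_I0 (z : ℝ) (hz : 0 ≤ z) : 1 ≤ I0 z := by
  have := (I0_summable z hz).le_tsum 0 (fun j _ => by positivity)
  simpa [I0] using this

theorem pk_nonneg' {t x y : ℝ} (ht : 0 < t) (hx : 0 < x) (hy : 0 < y) : 0 ≤ pk t x y := by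
  have := one_le_I0 (x*y/t) (by positivity)
  unfold pk
  positivity

theorem pk_le' {t x y : ℝ} (ht : 0 < t) (hx : 0 < x) (hy : 0 < y) :
    pk t x y ≤ t⁻¹ * Real.exp (-(x-y)^2/(2*t)) := by
  have := I0_le (x*y/t) (by positivity)
  unfold pk
  calc _ ≤ t⁻¹ * Real.exp (-(x^2 + y^2)/(2*t)) * Real.exp (x*y/t) := by gcongr
    _ = _ := by
      rw [mul_assoc, ← Real.exp_add]
      congr 2
      field_simp
      ring

theorem pk_le_inv {t x y : ℝ} (ht : 0 < t) (hx : 0 < x) (hy : 0 < y) : pk t x y ≤ t⁻¹ := by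
  refine (pk_le' ht hx hy).trans ?_
  have : Real.exp (-(x-y)^2/(2*t)) ≤ 1 := by
    rw [Real.exp_le_one_iff]
    rw [neg_div]
    have : 0 ≤ (x-y)^2/(2*t) := by positivity
    linarith
  have h0 : 0 < t⁻¹ := by positivity
  nlinarith

theorem le_pk {m t x y : ℝ} (ht : 0 < t) (hx : 0 < x) (hy : 0 < y) (hxm : x^2 ≤ m*t)
    (hym : y^2 ≤ m*t) : t⁻¹ * Real.exp (-m) ≤ pk t x y := by
  have := one_le_I0 (x*y/t) (by positivity)
  unfold pk
  calc _ = t⁻¹ * Real.exp (-m) * 1 := by ring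
    _ ≤ t⁻¹ * Real.exp (-(x^2 + y^2)/(2*t)) * I0 (x*y/t) := by
      gcongr
      rw [le_div_iff₀ (by positivity)]
      nlinarith

section
variable {p₁ : ℝ → ℝ → ℝ → ℝ} {q : ℝ → ℝ → ℝ}

theorem p1_le_pk (H : BesselHK p₁ q) {t x y : ℝ} (ht : 0 < t) (hx : 1 < x) (hy : 1 < y) :
    p₁ t x y ≤ pk t x y := by
  rw [H.hunt ht hx hy]
  have : 0 ≤ ∫ u in Set.Ioo 0 t, q x u * pk (t-u) 1 y := by
    apply setIntegral_nonneg measurableSet_Ioo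
    intro u hu
    exact mul_nonneg (H.q_nonneg hx hu.1) (pk_nonneg' (by linarith [hu.2]) one_pos (by linarith))
  linarith

theorem p1_le_inv (H : BesselHK p₁ q) {t x y : ℝ} (ht : 0 < t) (hx : 1 < x) (hy : 1 < y) :
    p₁ t x y ≤ t⁻¹ :=
  (p1_le_pk H ht hx hy).trans (pk_le_inv ht (by linarith) (by linarith))

theorem mass_integrable (H : BesselHK p₁ q) {t x : ℝ} (ht : 0 < t) (hx : 1 < x) :
    IntegrableOn (fun y => p₁ t x y * y) (Set.Ioi (1:ℝ)) := by
  by_contra hn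
  obtain ⟨c, C, hc, _, h⟩ := H.surv
  have h1 := (h ht hx).1
  rw [← H.mass ht hx, integral_undef hn] at h1
  have hs : 0 < Real.sqrt t := Real.sqrt_pos.2 ht
  have : 0 < min 1 (Real.log x / Real.log (1+Real.sqrt t)) :=
    lt_min one_pos (div_pos (Real.log_pos hx) (Real.log_pos (by linarith)))
  nlinarith [mul_pos hc this]

theorem meas_x (H : BesselHK p₁ q) (t x : ℝ) : Measurable fun y => p₁ t x y :=
  H.meas_p₁.comp (by fun_prop : Measurable fun y : ℝ => (t, x, y))

theorem meas_y (H : BesselHK p₁ q) (t y : ℝ) : Measurable fun x => p₁ t x y :=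
  H.meas_p₁.comp (by fun_prop : Measurable fun x : ℝ => (t, x, y))

/-- Mass function. -/
noncomputable def Sm (p₁ : ℝ → ℝ → ℝ → ℝ) (t x : ℝ) : ℝ := ∫ y in Set.Ioi (1:ℝ), p₁ t x y * y

theorem ck_integrable (H : BesselHK p₁ q) {t s x y : ℝ} (ht : 0 < t) (hs : 0 < s)
    (hx : 1 < x) (hy : 1 < y) :
    IntegrableOn (fun w => p₁ t x w * p₁ s w y * w) (Set.Ioi (1:ℝ)) := by
  have h1 := (mass_integrable H ht hx).const_mul s⁻¹
  refine Integrable.mono' h1 ?_ ?_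
  · exact (((meas_x H t x).mul (meas_y H s y)).mul measurable_id).aestronglyMeasurable
  · refine (ae_restrict_iff' measurableSet_Ioi).2 (Filter.Eventually.of_forall ?_)
    intro w hw
    have hw : 1 < w := hw
    have a := H.p₁_nonneg ht hx hw
    have b := H.p₁_nonneg hs hw hy
    have b' := p1_le_inv H hs hw hy
    rw [Real.norm_of_nonneg (by positivity)]
    have : 0 ≤ p₁ t x w * w := by positivity
    nlinarith

/-- Upper CK estimate. -/
theorem ck_upper (H : BesselHK p₁ q) {t s x y B : ℝ} (ht : 0 < t) (hs : 0 < s)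
    (hx : 1 < x) (hy : 1 < y) (hB : ∀ w, 1 < w → p₁ s w y ≤ B) :
    p₁ (t+s) x y ≤ B * Sm p₁ t x := by
  rw [H.ck ht hs hx hy, Sm, ← integral_const_mul]
  refine setIntegral_mono_on (ck_integrable H ht hs hx hy)
    ((mass_integrable H ht hx).const_mul B) measurableSet_Ioi ?_
  intro w hw
  have hw : 1 < w := hw
  have a := H.p₁_nonneg ht hx hw
  have b' := hB w hw
  have : 0 ≤ p₁ t x w * w := by positivity
  nlinarith

theorem Sm_nonneg (H : BesselHK p₁ q) {t x : ℝ} (ht : 0 < t) (hx : 1 < x) : 0 ≤ Sm p₁ t x := by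
  apply setIntegral_nonneg measurableSet_Ioi
  intro w hw
  have hw : 1 < w := hw
  have a := H.p₁_nonneg ht hx hw
  positivity

theorem p1_three_upper (H : BesselHK p₁ q) {s x y : ℝ} (hs : 0 < s)
    (hx : 1 < x) (hy : 1 < y) :
    p₁ (3*s) x y ≤ s⁻¹ * Sm p₁ s x * Sm p₁ s y := by
  have h2 : ∀ w, 1 < w → p₁ (2*s) w x ≤ s⁻¹ * Sm p₁ s x := by
    intro w hw
    rw [H.symm (by positivity) hw hx, two_mul]
    exact ck_upper H hs hs hx hw (fun v hv => p1_le_inv H hs hv hw)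
  rw [H.symm (by positivity) hx hy, show 3*s = s + 2*s by ring]
  exact ck_upper H hs (by positivity) hy hx h2

/-- Lower CK estimate restricted to a set. -/
theorem ck_lower (H : BesselHK p₁ q) {t s x y B : ℝ} (ht : 0 < t) (hs : 0 < s)
    (hx : 1 < x) (hy : 1 < y) {A : Set ℝ} (hA : MeasurableSet A) (hA1 : A ⊆ Set.Ioi 1)
    (hB : ∀ w ∈ A, B ≤ p₁ s w y) :
    B * (∫ w in A, p₁ t x w * w) ≤ p₁ (t+s) x y := by
  rw [H.ck ht hs hx hy, ← integral_const_mul]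
  have hi := ck_integrable H ht hs hx hy
  calc _ ≤ ∫ w in A, p₁ t x w * p₁ s w y * w := by
        refine setIntegral_mono_on (((mass_integrable H ht hx).mono_set hA1).const_mul B)
          (hi.mono_set hA1) hA ?_
        intro w hw
        have hw1 : 1 < w := hA1 hw
        have a := H.p₁_nonneg ht hx hw1
        have b' := hB w hw
        have : 0 ≤ p₁ t x w * w := by positivity
        nlinarith
    _ ≤ _ := by
        refine setIntegral_mono_set hi ?_ (Filter.Eventually.of_forall hA1)
        refine (ae_restrict_iff' measurableSet_Ioi).2 (Filter.Eventually.of_forall ?_)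
        intro w hw
        have hw : 1 < w := hw
        have a := H.p₁_nonneg ht hx hw
        have b := H.p₁_nonneg hs hw hy
        show (0:ℝ) ≤ p₁ t x w * p₁ s w y * w
        positivity

theorem sqrt_hker {s x v : ℝ} (hs : 0 < s) (hx : 1 < x) (hv : 1 < v) :
    Real.sqrt (x*v) * hker s x v = (Real.sqrt (2*Real.pi*s))⁻¹ * (Real.sqrt (x*v))⁻¹ *
      Real.exp (-(x-v)^2/(2*s)) * (1 - Real.exp (-(2*(x-1)*(v-1)/s))) := by
  have h1 : (2*Real.pi*s)^(-(1:ℝ)/2) = (Real.sqrt (2*Real.pi*s))⁻¹ := by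
    rw [Real.sqrt_eq_rpow, ← Real.rpow_neg (by positivity)]; norm_num
  have h2 : Real.sqrt (x*v) * (x*v)⁻¹ = (Real.sqrt (x*v))⁻¹ := by
    have h0 : 0 < x*v := by nlinarith
    have := Real.sq_sqrt h0.le
    have h3 := Real.sqrt_pos.2 h0
    field_simp
    exact this
  have h3 : Real.exp (-(x+v-2)^2/(2*s)) =
      Real.exp (-(x-v)^2/(2*s)) * Real.exp (-(2*(x-1)*(v-1)/s)) := by
    rw [← Real.exp_add]; congr 1; field_simp; ring
  unfold hker
  rw [h1, h3, ← h2]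
  ring

end
section
variable {p₁ : ℝ → ℝ → ℝ → ℝ} {q : ℝ → ℝ → ℝ}

theorem log_aux1 {a : ℝ} (ha : 0 < a) :
    Real.log (1+a) ≤ 2 * Real.log (1+Real.sqrt (a^2/3)) := by
  have h1 : a/2 ≤ Real.sqrt (a^2/3) := Real.le_sqrt_of_sq_le (by nlinarith)
  rw [show (2:ℝ) = ((2:ℕ):ℝ) by norm_num, ← Real.log_pow]
  apply Real.log_le_log (by linarith)
  nlinarith

theorem log_aux2 {a : ℝ} (ha : 0 < a) :
    Real.log (1+a) ≤ 4 * Real.log (1+Real.sqrt (a/4)) := by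
  have h0 : 0 ≤ Real.sqrt (a/4) := Real.sqrt_nonneg _
  have h1 : Real.sqrt (a/4) ^ 2 = a/4 := Real.sq_sqrt (by positivity)
  rw [show (4:ℝ) = ((4:ℕ):ℝ) by norm_num, ← Real.log_pow]
  apply Real.log_le_log (by linarith)
  push_cast
  set z := Real.sqrt (a/4)
  have : a = 4*z^2 := by linarith
  rw [this]
  have e : (1+z)^4 = 1 + 4*z + 6*z^2+4*z^3+z^4 := by ring
  rw [e]
  have : 0 ≤ 4*z + 2*z^2+4*z^3+z^4 := by positivity
  linarith

theorem log_aux3 {a : ℝ} (ha : 1/2 ≤ a) :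
    Real.log (9*a^2) ≤ 8 * Real.log (1+a) := by
  rw [show (8:ℝ) = ((8:ℕ):ℝ) by norm_num, ← Real.log_pow]
  apply Real.log_le_log (by positivity)
  have h1 : (9:ℝ) ≤ (1+a)^6 := by
    calc (9:ℝ) ≤ (3/2)^6 := by norm_num
      _ ≤ _ := by gcongr; linarith
  have h2 : a^2 ≤ (1+a)^2 := by nlinarith
  calc 9*a^2 ≤ (1+a)^6 * (1+a)^2 := by gcongr
    _ = _ := by ring

theorem log_aux4 {a : ℝ} (ha : 1/2 ≤ a) :
    Real.log (1+a) ≤ Real.log (9*a^2) := by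
  apply Real.log_le_log (by linarith)
  nlinarith

/-- Consequence of (Surv) and (Mass). -/
def SurvB (p₁ : ℝ → ℝ → ℝ → ℝ) (c' C' : ℝ) : Prop :=
  ∀ ⦃t x : ℝ⦄, 0 < t → 1 < x →
    c' * min 1 (Real.log x / Real.log (1+Real.sqrt t)) ≤ Sm p₁ t x ∧
    Sm p₁ t x ≤ C' ∧ Sm p₁ t x ≤ C' * (Real.log x / Real.log (1+Real.sqrt t))

theorem survB (H : BesselHK p₁ q) : ∃ c' C' : ℝ, 0 < c' ∧ 0 < C' ∧ SurvB p₁ c' C' := by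
  obtain ⟨c, C, hc, hcC, h⟩ := H.surv
  have hC : 0 < C := by linarith
  refine ⟨c, C, hc, hC, ?_⟩
  intro t x ht hx
  have h1 := h ht hx
  rw [← H.mass ht hx] at h1
  refine ⟨h1.1, h1.2.trans ?_, h1.2.trans ?_⟩
  · have := min_le_left 1 (Real.log x / Real.log (1+Real.sqrt t))
    nlinarith
  · have := min_le_right 1 (Real.log x / Real.log (1+Real.sqrt t))
    gcongr

theorem near_bound (H : BesselHK p₁ q) {c' C' : ℝ} (hC : 0 < C') (hS : SurvB p₁ c' C')
    {a x w : ℝ} (ha : 0 < a) (hx : 1 < x) (hw : 1 < w) :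
    p₁ (a^2) x w ≤ 6*C'^2 * (Real.log x / Real.log (1+a)) / a^2 := by
  have hs : 0 < a^2/3 := by positivity
  have h := p1_three_upper H hs hx hw
  rw [show 3*(a^2/3) = a^2 by ring] at h
  have h1 := (hS hs hx).2.2
  have h2 := (hS hs hw).2.1
  have hl := log_aux1 ha
  have hp : 0 < Real.log (1+a) := Real.log_pos (by linarith)
  have hlx := Real.log_pos hx
  have h3 : Real.log x / Real.log (1+Real.sqrt (a^2/3)) ≤ 2 * (Real.log x / Real.log (1+a)) := by
    rw [div_le_iff₀ (by linarith)]
    have : 2 * (Real.log x / Real.log (1+a)) * Real.log (1+Real.sqrt (a^2/3)) =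
      Real.log x * (2 * Real.log (1+Real.sqrt (a^2/3)) / Real.log (1+a)) := by ring
    rw [this]
    have : 1 ≤ 2 * Real.log (1+Real.sqrt (a^2/3)) / Real.log (1+a) := by
      rw [le_div_iff₀ hp]; linarith
    nlinarith
  have h4 : Sm p₁ (a^2/3) x ≤ C' * (2 * (Real.log x / Real.log (1+a))) :=
    h1.trans (by gcongr)
  have := Sm_nonneg H hs hw
  calc _ ≤ _ := h
    _ ≤ (a^2/3)⁻¹ * (C' * (2 * (Real.log x / Real.log (1+a)))) * C' := by
      gcongr
    _ = _ := by
      field_simp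
      ring

theorem ac_tail (H : BesselHK p₁ q) {a x v : ℝ} (ha : 1/2 ≤ a) (hx : 1 < x) (hxa : x^2 ≤ 1 + a)
    (hv : 1 < v) (hva : 12*a ≤ v) :
    p₁ (a/4) x v * v ≤ 384 * Real.log x * Real.exp (-v/2) := by
  have ha0 : 0 < a := by linarith
  have hr : 0 < a/4 := by linarith
  have h := (H.ac hr hx hv).2
  rw [mul_assoc, sqrt_hker hr hx hv] at h
  have b1 : (Real.sqrt (2*Real.pi*(a/4)))⁻¹ ≤ 2 := by
    have : (1/2:ℝ) ≤ Real.sqrt (2*Real.pi*(a/4)) := by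
      apply Real.le_sqrt_of_sq_le
      nlinarith [Real.pi_gt_three]
    rw [inv_le_comm₀ (by linarith) (by norm_num)]
    linarith
  have b2 : (Real.sqrt (x*v))⁻¹ ≤ 1 := by
    apply inv_le_one_of_one_le₀
    rw [Real.one_le_sqrt]
    nlinarith
  have hlx := Real.log_pos hx
  have b3 : 1 - Real.exp (-(2*(x-1)*(v-1)/(a/4))) ≤ 4 * v^2 * Real.log x := by
    have e1 := Real.add_one_le_exp (-(2*(x-1)*(v-1)/(a/4)))
    have e2 : 2*(x-1)*(v-1)/(a/4) ≤ 16*(x-1)*v := by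
      rw [div_le_iff₀ hr]
      have : 0 ≤ (x-1)*v := by nlinarith
      nlinarith
    have e3 : x - 1 ≤ x * Real.log x := by
      have := Real.one_sub_inv_le_log_of_pos (by linarith : 0 < x)
      have h2 : x * (1 - x⁻¹) = x - 1 := by field_simp
      nlinarith
    have e4 : x ≤ v/4 := by nlinarith
    have e5 : x * Real.log x ≤ v/4 * Real.log x := by gcongr
    nlinarith
  have b4 : Real.exp (a/4/8) * Real.exp (-(x-v)^2/(2*(a/4))) ≤ Real.exp (-v) := by
    rw [← Real.exp_add]
    apply Real.exp_le_exp.2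
    have e4 : x ≤ v/4 := by nlinarith
    have e5 : (9/16) * v^2 ≤ (x-v)^2 := by nlinarith
    have : 12 * v ≤ (x-v)^2/(2*(a/4)) := by
      rw [le_div_iff₀ (by linarith)]
      nlinarith
    rw [neg_div]
    linarith
  have b5 : v^3 ≤ 48 * Real.exp (v/2) := by
    have := Real.pow_div_factorial_le_exp (v/2) (by linarith) 3
    norm_num [Nat.factorial] at this
    nlinarith
  have b6 : Real.exp (v/2) * Real.exp (-v) = Real.exp (-v/2) := by
    rw [← Real.exp_add]; congr 1; ring
  have b7 : 0 ≤ 1 - Real.exp (-(2*(x-1)*(v-1)/(a/4))) := by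
    have : Real.exp (-(2*(x-1)*(v-1)/(a/4))) ≤ 1 := by
      rw [Real.exp_le_one_iff]
      have : 0 ≤ 2*(x-1)*(v-1)/(a/4) := by
        have h1 : 0 ≤ x - 1 := by linarith
        have h2 : 0 ≤ v - 1 := by linarith
        positivity
      linarith
    linarith
  set E := 1 - Real.exp (-(2*(x-1)*(v-1)/(a/4)))
  calc p₁ (a/4) x v * v ≤ (Real.exp (a/4/8) * ((Real.sqrt (2*Real.pi*(a/4)))⁻¹ * (Real.sqrt (x*v))⁻¹ *
      Real.exp (-(x-v)^2/(2*(a/4))) * E)) * v := by gcongr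
    _ = ((Real.sqrt (2*Real.pi*(a/4)))⁻¹ * (Real.sqrt (x*v))⁻¹) *
      (Real.exp (a/4/8) * Real.exp (-(x-v)^2/(2*(a/4)))) * E * v := by ring
    _ ≤ (2 * 1) * Real.exp (-v) * (4 * v^2 * Real.log x) * v := by gcongr
    _ = 8 * Real.log x * Real.exp (-v) * v^3 := by ring
    _ ≤ 8 * Real.log x * Real.exp (-v) * (48 * Real.exp (v/2)) := by gcongr
    _ = 384 * Real.log x * (Real.exp (v/2) * Real.exp (-v)) := by ring
    _ = _ := by rw [b6]

theorem integral_exp_tail {k B : ℝ} (hk : 0 < k) :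
    IntegrableOn (fun v : ℝ => Real.exp (-v/k)) (Set.Ioi B) ∧
    (∫ v in Set.Ioi B, Real.exp (-v/k)) = k * Real.exp (-B/k) := by
  have e : (fun v : ℝ => Real.exp (-v/k)) = fun v => Real.exp ((-1/k) * v) := by
    funext v; congr 1; ring
  have hn : -1/k < 0 := by rw [neg_div]; have : 0 < 1/k := by positivity
                           linarith
  rw [e]
  refine ⟨integrableOn_exp_mul_Ioi hn B, ?_⟩
  rw [integral_exp_mul_Ioi hn B]
  rw [show -1/k*B = -B/k by ring]
  field_simp

theorem exp_aux {a u v w : ℝ} (ha : 0 < a) (hu : 0 < u) (hua : u ≤ a^2) (hw : 24*a ≤ w)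
    (hvw : v ≤ w/2) : Real.exp (-(v-w)^2/(2*u)) ≤ Real.exp (-w/(32*a)) := by
  have hw0 : 0 < w := by linarith
  apply Real.exp_le_exp.2
  rw [neg_div, neg_div, neg_le_neg_iff, div_le_div_iff₀ (by positivity) (by positivity)]
  have h1 : w^2/4 ≤ (v-w)^2 := by nlinarith
  have h2 : 6*a*w ≤ (v-w)^2 := by nlinarith
  have h3 : 6*a*w*(32*a) ≤ (v-w)^2*(32*a) := by gcongr
  have h4 : w*(2*u) ≤ w*(2*a^2) := by gcongr
  have h5 : 0 < w*a^2 := by positivity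
  nlinarith

set_option maxHeartbeats 800000 in
theorem far_bound (H : BesselHK p₁ q) {c' C' : ℝ} (hC : 0 < C') (hS : SurvB p₁ c' C')
    {a x w b m : ℝ} (ha : 1/2 ≤ a) (hx : 1 < x) (hm : 2 ≤ m) (hxm : x^2 ≤ 3*m*a^2)
    (hb : 24 ≤ b) (hbm : 6*m ≤ b) (hw1 : 1 < w) (hw : b*a ≤ w) :
    p₁ (a^2) x w ≤ (8*C'+49154) * (Real.log x / Real.log (1+a)) / a^2 * Real.exp (-w/(32*a)) := by
  have ha0 : 0 < a := by linarith
  have hs : 0 < a^2 := by positivity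
  have hp : 0 < Real.log (1+a) := Real.log_pos (by linarith)
  have hlx := Real.log_pos hx
  have hw24 : 24*a ≤ w := by nlinarith
  have hL : 0 < Real.log x / Real.log (1+a) := by positivity
  set L := Real.log x / Real.log (1+a) with hLd
  rcases le_total (1+a) (x^2) with hc | hc
  · have h2L : 1 ≤ 2 * L := by
      rw [hLd, ← mul_div_assoc, le_div_iff₀ hp, one_mul,
        show (2:ℝ) = ((2:ℕ):ℝ) by norm_num, ← Real.log_pow]
      exact Real.log_le_log (by linarith) hc
    have hx2 : x ≤ w/2 := by
      have : x ≤ 3*m*a := by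
        apply le_of_sq_le_sq _ (by positivity)
        have : 3*m ≤ (3*m)^2 := by nlinarith
        calc x^2 ≤ 3*m*a^2 := hxm
          _ ≤ (3*m)^2*a^2 := by gcongr
          _ = _ := by ring
      nlinarith
    have h1 := (p1_le_pk H hs hx hw1).trans (pk_le' hs (by linarith) (by linarith))
    have h2 : Real.exp (-(x-w)^2/(2*a^2)) ≤ Real.exp (-w/(32*a)) := by
      exact exp_aux ha0 hs le_rfl hw24 hx2
    calc _ ≤ _ := h1
      _ ≤ (a^2)⁻¹ * Real.exp (-w/(32*a)) := by gcongr
      _ = 1 / a^2 * Real.exp (-w/(32*a)) := by ring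
      _ ≤ _ := by
        gcongr
        nlinarith
  · have hr : 0 < a/4 := by positivity
    have hu : a^2/2 ≤ a^2 - a/4 := by nlinarith
    have hu' : a^2 - a/4 ≤ a^2 := by linarith
    have hu0 : 0 < a^2 - a/4 := by linarith
    set u := a^2 - a/4 with hud
    have hsum : a^2 = a/4 + u := by rw [hud]; ring
    have huinv : u⁻¹ ≤ 2/a^2 := by
      calc u⁻¹ ≤ (a^2/2)⁻¹ := by gcongr
        _ = _ := by rw [inv_div]
    obtain ⟨hi4, he4⟩ := integral_exp_tail (k := 4) (B := 1) (by norm_num)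
    have hG1 := (mass_integrable H hr hx).const_mul (2/a^2 * Real.exp (-w/(32*a)))
    have hG2 := hi4.const_mul (2/a^2 * (384 * Real.log x * Real.exp (-w/8)))
    have key : p₁ (a^2) x w ≤ 2/a^2 * Real.exp (-w/(32*a)) * Sm p₁ (a/4) x +
        2/a^2 * (384 * Real.log x * Real.exp (-w/8)) * (4 * Real.exp (-1/4)) := by
      rw [hsum, H.ck hr hu0 hx hw1, ← hsum, Sm, ← he4, ← integral_const_mul,
        ← integral_const_mul, ← integral_add hG1 hG2]
      refine setIntegral_mono_on (ck_integrable H hr hu0 hx hw1) (hG1.add hG2)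
        measurableSet_Ioi ?_
      intro v hv
      have hv : 1 < v := hv
      have f1 := H.p₁_nonneg hr hx hv
      have f2 := H.p₁_nonneg hu0 hv hw1
      have f3 : 0 ≤ p₁ (a/4) x v * v := by positivity
      rcases le_total v (w/2) with hvw | hvw
      · have h1 := (p1_le_pk H hu0 hv hw1).trans (pk_le' hu0 (by linarith) (by linarith))
        have h2 : Real.exp (-(v-w)^2/(2*u)) ≤ Real.exp (-w/(32*a)) := by
          exact exp_aux ha0 hu0 hu' hw24 hvw
        have h3 : p₁ u v w ≤ 2/a^2 * Real.exp (-w/(32*a)) := h1.trans (by gcongr)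
        have h4 : 0 ≤ 2/a^2 * (384 * Real.log x * Real.exp (-w/8)) * Real.exp (-v/4) := by
          positivity
        have h5 := mul_le_mul_of_nonneg_right h3 f3
        show p₁ (a/4) x v * p₁ u v w * v ≤ 2/a^2 * Real.exp (-w/(32*a)) * (p₁ (a/4) x v * v) +
          2/a^2 * (384 * Real.log x * Real.exp (-w/8)) * Real.exp (-v/4)
        linarith
      · have h1 := (p1_le_inv H hu0 hv hw1).trans huinv
        have h2 := ac_tail H ha hx hc hv (by linarith)
        have h3 : Real.exp (-v/2) ≤ Real.exp (-w/8) * Real.exp (-v/4) := by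
          rw [← Real.exp_add]
          apply Real.exp_le_exp.2
          linarith
        have h4 : p₁ (a/4) x v * v ≤ 384 * Real.log x * (Real.exp (-w/8) * Real.exp (-v/4)) :=
          h2.trans (by gcongr)
        have h5 : 0 ≤ 2/a^2 * Real.exp (-w/(32*a)) * (p₁ (a/4) x v * v) := by positivity
        have h6 : p₁ u v w * (p₁ (a/4) x v * v) ≤
          2/a^2 * (384 * Real.log x * (Real.exp (-w/8) * Real.exp (-v/4))) := by gcongr
        show p₁ (a/4) x v * p₁ u v w * v ≤ 2/a^2 * Real.exp (-w/(32*a)) * (p₁ (a/4) x v * v) +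
          2/a^2 * (384 * Real.log x * Real.exp (-w/8)) * Real.exp (-v/4)
        linarith
    have g1 : Sm p₁ (a/4) x ≤ 4*C'*L := by
      refine ((hS hr hx).2.2).trans ?_
      have hl := log_aux2 ha0
      have : Real.log x / Real.log (1+Real.sqrt (a/4)) ≤ 4 * L := by
        rw [div_le_iff₀ (by linarith)]
        have h1 : L * Real.log (1+a) = Real.log x := by rw [hLd]; field_simp
        nlinarith
      nlinarith
    have g2 : Real.log x * Real.exp (-w/8) ≤ 16 * L * Real.exp (-w/(32*a)) := by
      have h1 : L * Real.log (1+a) = Real.log x := by rw [hLd]; field_simp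
      have h2 : Real.log (1+a) ≤ w := by
        have := Real.log_le_sub_one_of_pos (show 0 < 1+a by linarith)
        linarith
      have h3 : w ≤ 16 * Real.exp (w/16) := by
        have := Real.add_one_le_exp (w/16)
        linarith
      have h4 : Real.exp (-w/16) ≤ Real.exp (-w/(32*a)) := by
        apply Real.exp_le_exp.2
        rw [neg_div, neg_div, neg_le_neg_iff]
        apply div_le_div_of_nonneg_left (by linarith) (by norm_num) (by linarith)
      calc Real.log x * Real.exp (-w/8) = L * Real.log (1+a) * Real.exp (-w/8) := by rw [h1]
        _ ≤ L * (16 * Real.exp (w/16)) * Real.exp (-w/8) := by gcongr; linarith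
        _ = 16 * L * (Real.exp (w/16) * Real.exp (-w/8)) := by ring
        _ = 16 * L * Real.exp (-w/16) := by rw [← Real.exp_add]; congr 2; ring
        _ ≤ _ := by gcongr
    have g3 : Real.exp (-1/4) ≤ 1 := by rw [Real.exp_le_one_iff]; norm_num
    calc _ ≤ _ := key
      _ ≤ 2/a^2 * Real.exp (-w/(32*a)) * (4*C'*L) + 2/a^2 * (384 * (16 * L * Real.exp (-w/(32*a)))) * (4 * 1) := by
        rw [mul_assoc 384]
        gcongr
      _ = (8*C'+49152) * L / a^2 * Real.exp (-w/(32*a)) := by ring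
      _ ≤ _ := by gcongr; norm_num

end
section
variable {p₁ : ℝ → ℝ → ℝ → ℝ} {q : ℝ → ℝ → ℝ}

theorem mid_lower (H : BesselHK p₁ q) {a b d w v : ℝ} (ha : 0 < a) (hd : 0 < d) (hb : 0 < b)
    (hw : 1 + d*a < w) (hw' : w ≤ b*a) (hv : 1 + d*a < v) (hv' : v ≤ b*a) :
    (3*b)⁻¹ * Real.exp (-b^2/2) * (1 - Real.exp (-(2*d^2))) / a^2 ≤ p₁ (a^2) w v := by
  have hda : 0 < d*a := by positivity
  have hs : 0 < a^2 := by positivity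
  have hw1 : 1 < w := by linarith
  have hv1 : 1 < v := by linarith
  have h := (H.ac hs hw1 hv1).1
  rw [sqrt_hker hs hw1 hv1] at h
  refine le_trans ?_ h
  have b1 : (3*a)⁻¹ ≤ (Real.sqrt (2*Real.pi*a^2))⁻¹ := by
    gcongr
    rw [Real.sqrt_le_left (by positivity)]
    nlinarith [Real.pi_lt_four]
  have b2 : (b*a)⁻¹ ≤ (Real.sqrt (w*v))⁻¹ := by
    gcongr
    rw [Real.sqrt_le_left (by positivity)]
    nlinarith
  have b3 : Real.exp (-b^2/2) ≤ Real.exp (-(w-v)^2/(2*a^2)) := by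
    apply Real.exp_le_exp.2
    rw [neg_div, neg_div, neg_le_neg_iff, div_le_div_iff₀ (by positivity) (by positivity)]
    have : (w-v)^2 ≤ (b*a)^2 := by
      apply sq_le_sq'
      · linarith
      · linarith
    nlinarith
  have b4 : Real.exp (-(2*(w-1)*(v-1)/a^2)) ≤ Real.exp (-(2*d^2)) := by
    apply Real.exp_le_exp.2
    rw [neg_le_neg_iff, le_div_iff₀ hs]
    have : (d*a)*(d*a) ≤ (w-1)*(v-1) := by gcongr <;> linarith
    nlinarith
  have b5 : 0 ≤ 1 - Real.exp (-(2*d^2)) := by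
    have : Real.exp (-(2*d^2)) ≤ 1 := by
      rw [Real.exp_le_one_iff]; nlinarith [sq_nonneg d]
    linarith
  calc _ = (3*a)⁻¹ * (b*a)⁻¹ * Real.exp (-b^2/2) * (1 - Real.exp (-(2*d^2))) := by
        field_simp
    _ ≤ _ := by gcongr

theorem mid_mass (H : BesselHK p₁ q) {c' C' m : ℝ} (hc : 0 < c') (hC : 0 < C')
    (hS : SurvB p₁ c' C') (hm : 2 ≤ m) :
    ∃ d b k : ℝ, 0 < d ∧ 0 < b ∧ 0 < k ∧ ∀ a x : ℝ, 1/2 ≤ a → 1 < x → x^2 ≤ 3*m*a^2 →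
      k * (Real.log x / Real.log (1+a)) ≤ ∫ w in Set.Ioc (1+d*a) (b*a), p₁ (a^2) x w * w := by
  have hl3 : 0 < Real.log (3/2) := Real.log_pos (by norm_num)
  have hlm : 0 < Real.log (3*m) := Real.log_pos (by linarith)
  obtain ⟨M, hM⟩ : ∃ M, M = 1 + Real.log (3*m) / Real.log (3/2) := ⟨_, rfl⟩
  have hM1 : 1 ≤ M := by rw [hM]; have : 0 < Real.log (3*m) / Real.log (3/2) := by positivity
                         linarith
  have hM0 : 0 < M := by linarith
  obtain ⟨N, hN⟩ : ∃ N, N = 6*C'^2 := ⟨_, rfl⟩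
  have hN0 : 0 < N := by rw [hN]; positivity
  obtain ⟨K, hK⟩ : ∃ K, K = 8*C'+49154 := ⟨_, rfl⟩
  have hK0 : 0 < K := by rw [hK]; positivity
  obtain ⟨k, hk⟩ : ∃ k, k = c'/M := ⟨_, rfl⟩
  have hk0 : 0 < k := by rw [hk]; positivity
  obtain ⟨d, hd0, hd1, hdk⟩ : ∃ d : ℝ, 0 < d ∧ d ≤ 1 ∧ 3*d*N ≤ k/4 := by
    refine ⟨min 1 (k/(12*N)), by positivity, min_le_left _ _, ?_⟩
    have : min 1 (k/(12*N)) ≤ k/(12*N) := min_le_right _ _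
    rw [le_div_iff₀ (by positivity)] at this
    linarith
  obtain ⟨b, hb24, hbm, hbk⟩ : ∃ b : ℝ, 24 ≤ b ∧ 6*m ≤ b ∧ 4096*K*Real.exp (-b/64) ≤ k/4 := by
    refine ⟨max (max 24 (6*m)) (64*(4*4096*K/k)), (le_max_left _ _).trans (le_max_left _ _),
      (le_max_right _ _).trans (le_max_left _ _), ?_⟩
    set b := max (max 24 (6*m)) (64*(4*4096*K/k))
    have h1 : 64*(4*4096*K/k) ≤ b := le_max_right _ _
    have h2 := Real.add_one_le_exp (b/64)
    have h3 : 4*4096*K/k ≤ Real.exp (b/64) := by linarith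
    rw [div_le_iff₀ hk0] at h3
    have h4 : Real.exp (-b/64) = (Real.exp (b/64))⁻¹ := by rw [← Real.exp_neg]; congr 1; ring
    rw [h4, ← div_eq_mul_inv, div_le_iff₀ (Real.exp_pos _)]
    linarith
  have hb0 : 0 < b := by linarith
  refine ⟨d, b, k/2, hd0, hb0, by positivity, ?_⟩
  intro a x ha hx hxm
  have ha0 : 0 < a := by linarith
  have hs : 0 < a^2 := by positivity
  have hp : 0 < Real.log (1+a) := Real.log_pos (by linarith)
  have hlx := Real.log_pos hx
  have hL : 0 < Real.log x / Real.log (1+a) := by positivity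
  have hLM : Real.log x / Real.log (1+a) ≤ M := by
    have h1 : Real.log x ≤ Real.log (3*m) + Real.log (1+a) := by
      rw [← Real.log_mul (by positivity) (by positivity)]
      apply Real.log_le_log (by linarith)
      have : x ≤ 3*m*a := by
        apply le_of_sq_le_sq _ (by positivity)
        have : 3*m ≤ (3*m)^2 := by nlinarith
        calc x^2 ≤ 3*m*a^2 := hxm
          _ ≤ (3*m)^2*a^2 := by gcongr
          _ = _ := by ring
      nlinarith
    have h2 : Real.log (3/2) ≤ Real.log (1+a) := Real.log_le_log (by norm_num) (by linarith)
    calc Real.log x / Real.log (1+a) ≤ (Real.log (3*m) + Real.log (1+a)) / Real.log (1+a) := by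
          gcongr
      _ = 1 + Real.log (3*m) / Real.log (1+a) := by field_simp; ring
      _ ≤ _ := by rw [hM]; gcongr
  have hlow := (hS hs hx).1
  rw [Real.sqrt_sq ha0.le] at hlow
  have hnear : ∀ w, 1 < w → p₁ (a^2) x w ≤ N * (Real.log x / Real.log (1+a)) / a^2 := by
    intro w hw; rw [hN]; exact near_bound H hC hS ha0 hx hw
  have hfar : ∀ w, 1 < w → b*a ≤ w → p₁ (a^2) x w ≤
      K * (Real.log x / Real.log (1+a)) / a^2 * Real.exp (-w/(32*a)) := by
    intro w hw hw'; rw [hK]; exact far_bound H hC hS ha hx hm hxm hb24 hbm hw hw'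
  set L := Real.log x / Real.log (1+a) with hLd
  have hmin : k * L ≤ c' * min 1 L := by
    have : L/M ≤ min 1 L := by
      apply le_min
      · rw [div_le_one hM0]; exact hLM
      · exact div_le_self hL.le hM1
    calc k*L = c' * (L/M) := by rw [hk]; ring
      _ ≤ _ := by gcongr
  have hda : 0 < d*a := by positivity
  have hord : 1 + d*a ≤ b*a := by nlinarith
  have hba : 1 < b*a := by linarith
  have hI := mass_integrable H hs hx
  have hI1 : IntegrableOn (fun y => p₁ (a^2) x y * y) (Set.Ioc 1 (1+d*a)) :=
    hI.mono_set (fun z hz => hz.1)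
  have hI2 : IntegrableOn (fun y => p₁ (a^2) x y * y) (Set.Ioc (1+d*a) (b*a)) :=
    hI.mono_set (fun z hz => lt_trans (by linarith) hz.1)
  have hI3 : IntegrableOn (fun y => p₁ (a^2) x y * y) (Set.Ioi (b*a)) :=
    hI.mono_set (fun z hz => lt_trans hba hz)
  have hI23 : IntegrableOn (fun y => p₁ (a^2) x y * y) (Set.Ioi (1+d*a)) :=
    hI.mono_set (fun z hz => lt_trans (show (1:ℝ) < 1+d*a by linarith) hz)
  have hsplit : Sm p₁ (a^2) x = (∫ w in Set.Ioc 1 (1+d*a), p₁ (a^2) x w * w) +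
      ((∫ w in Set.Ioc (1+d*a) (b*a), p₁ (a^2) x w * w) +
      ∫ w in Set.Ioi (b*a), p₁ (a^2) x w * w) := by
    rw [Sm, ← setIntegral_union (Set.Ioc_disjoint_Ioi le_rfl) measurableSet_Ioi hI2 hI3,
      Set.Ioc_union_Ioi_eq_Ioi hord,
      ← setIntegral_union (Set.Ioc_disjoint_Ioi le_rfl) measurableSet_Ioi hI1 hI23,
      Set.Ioc_union_Ioi_eq_Ioi (by linarith)]
  have hA : (∫ w in Set.Ioc 1 (1+d*a), p₁ (a^2) x w * w) ≤ 3*d*N*L := by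
    calc _ ≤ ∫ w in Set.Ioc 1 (1+d*a), (N * L / a^2 * (3*a)) := by
          refine setIntegral_mono_on hI1 (integrableOn_const (by simp)) measurableSet_Ioc ?_
          intro w hw
          have h1 := hnear w hw.1
          have h2 : w ≤ 3*a := by nlinarith [hw.2]
          have h3 : 0 < w := by linarith [hw.1]
          gcongr
      _ = (N * L / a^2 * (3*a)) * (d*a) := by
          rw [setIntegral_const]
          simp [hda.le]
          ring
      _ = _ := by field_simp
  have hB : (∫ w in Set.Ioi (b*a), p₁ (a^2) x w * w) ≤ 4096*K*Real.exp (-b/64)*L := by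
    obtain ⟨hi, he⟩ := integral_exp_tail (k := 64*a) (B := b*a) (by positivity)
    calc _ ≤ ∫ w in Set.Ioi (b*a), (K * L / a^2 * (64*a)) * Real.exp (-w/(64*a)) := by
          refine setIntegral_mono_on hI3 (hi.const_mul _) measurableSet_Ioi ?_
          intro w hw
          have hw : b*a < w := hw
          have h1 := hfar w (by linarith) hw.le
          have h3 : 0 < w := by linarith
          have h4 : w ≤ 64*a * Real.exp (w/(64*a)) := by
            have := Real.add_one_le_exp (w/(64*a))
            have h5 : w/(64*a) ≤ Real.exp (w/(64*a)) := by linarith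
            rw [div_le_iff₀ (by positivity)] at h5
            linarith
          calc p₁ (a^2) x w * w ≤ (K * L / a^2 * Real.exp (-w/(32*a))) *
                (64*a * Real.exp (w/(64*a))) := by gcongr
            _ = (K * L / a^2 * (64*a)) * (Real.exp (-w/(32*a)) * Real.exp (w/(64*a))) := by ring
            _ = _ := by
              rw [← Real.exp_add]
              congr 2
              field_simp
              ring
      _ = (K * L / a^2 * (64*a)) * (64*a*Real.exp (-(b*a)/(64*a))) := by
          rw [integral_const_mul, he]
      _ = _ := by
          rw [show -(b*a)/(64*a) = -b/64 by field_simp]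
          field_simp
          ring
  have e1 : 3*d*N*L ≤ k/4*L := by gcongr
  have e2 : 4096*K*Real.exp (-b/64)*L ≤ k/4*L := by gcongr
  linarith

end

theorem bessel_heat_kernel_estimate_both_small (p₁ : ℝ → ℝ → ℝ → ℝ) (q : ℝ → ℝ → ℝ)
    (H : BesselHK p₁ q) :
    ∀ m : ℝ, 2 ≤ m → ∃ c C : ℝ, 0 < c ∧ c ≤ C ∧
      ∀ t x y : ℝ, 0 < t → 1 < x → 1 < y → x*y < t → x^2 ≤ m*t → y^2 ≤ m*t →
        c * (Real.log x * Real.log y / (Real.log (3*t))^2) * pk t x y ≤ p₁ t x y ∧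
        p₁ t x y ≤ C * (Real.log x * Real.log y / (Real.log (3*t))^2) * pk t x y := by
  intro m hm
  obtain ⟨c', C', hc, hC, hS⟩ := survB H
  obtain ⟨d, b, k, hd, hb, hk, hmass⟩ := mid_mass H hc hC hS hm
  have hκ : 0 < (3*b)⁻¹ * Real.exp (-b^2/2) * (1 - Real.exp (-(2*d^2))) := by
    have : Real.exp (-(2*d^2)) < 1 := by
      rw [Real.exp_lt_one_iff]
      have : 0 < d^2 := by positivity
      linarith
    have : 0 < 1 - Real.exp (-(2*d^2)) := by linarith
    positivity
  have hmid : ∀ a w v : ℝ, 0 < a → w ∈ Set.Ioc (1+d*a) (b*a) → v ∈ Set.Ioc (1+d*a) (b*a) →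
      (3*b)⁻¹ * Real.exp (-b^2/2) * (1 - Real.exp (-(2*d^2))) / a^2 ≤ p₁ (a^2) w v :=
    fun a w v ha hw hv => mid_lower H ha hd hb hw.1 hw.2 hv.1 hv.2
  set κ := (3*b)⁻¹ * Real.exp (-b^2/2) * (1 - Real.exp (-(2*d^2)))
  have main : ∀ t x y : ℝ, 0 < t → 1 < x → 1 < y → x*y < t → x^2 ≤ m*t → y^2 ≤ m*t →
      (3*κ*k^2) * (Real.log x * Real.log y / (Real.log (3*t))^2) * pk t x y ≤ p₁ t x y ∧
      p₁ t x y ≤ (3*64*C'^2*4*Real.exp m) *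
        (Real.log x * Real.log y / (Real.log (3*t))^2) * pk t x y := by
    intro t x y ht hx hy hxy hxm hym
    obtain ⟨a, had⟩ : ∃ a, a = Real.sqrt (t/3) := ⟨_, rfl⟩
    have hat : t = 3*a^2 := by rw [had, Real.sq_sqrt (by positivity)]; ring
    have ha : 1/2 ≤ a := by
      rw [had]
      apply Real.le_sqrt_of_sq_le
      nlinarith
    have ha0 : 0 < a := by linarith
    have hs : 0 < a^2 := by positivity
    have hlx := Real.log_pos hx
    have hly := Real.log_pos hy
    have hp : 0 < Real.log (1+a) := Real.log_pos (by linarith)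
    have l3 := log_aux3 ha
    have l4 := log_aux4 ha
    have ht9 : 3*t = 9*a^2 := by rw [hat]; ring
    rw [← ht9] at l3 l4
    have hpk1 := pk_le_inv ht (show 0 < x by linarith) (show 0 < y by linarith)
    have hpk2 := le_pk ht (show 0 < x by linarith) (show 0 < y by linarith) hxm hym
    have hpk0 := pk_nonneg' ht (show 0 < x by linarith) (show 0 < y by linarith)
    have hT : 0 < Real.log (3*t) := by linarith
    constructor
    · have hx1 := hmass a x ha hx (by rw [hat] at hxm; linarith)
      have hy1 := hmass a y ha hy (by rw [hat] at hym; linarith)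
      have hsub : Set.Ioc (1+d*a) (b*a) ⊆ Set.Ioi 1 := by
        intro z hz
        have : 0 < d*a := by positivity
        have := hz.1
        show 1 < z
        linarith
      have h2 : ∀ v ∈ Set.Ioc (1+d*a) (b*a),
          κ/a^2 * (k * (Real.log x / Real.log (1+a))) ≤ p₁ (2*a^2) v x := by
        intro v hv
        rw [H.symm (by positivity) (hsub hv) hx, two_mul]
        refine le_trans ?_ (ck_lower H hs hs hx (hsub hv) measurableSet_Ioc hsub
          (fun w hw => hmid a w v ha0 hw hv))
        gcongr
      have h3 := ck_lower H hs (show 0 < 2*a^2 by positivity) hy hx measurableSet_Ioc hsub h2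
      rw [show a^2 + 2*a^2 = t by rw [hat]; ring, H.symm ht hy hx] at h3
      refine le_trans ?_ h3
      calc (3*κ*k^2) * (Real.log x * Real.log y / (Real.log (3*t))^2) * pk t x y
          ≤ (3*κ*k^2) * (Real.log x * Real.log y / (Real.log (1+a))^2) * t⁻¹ := by gcongr
        _ = κ/a^2 * (k * (Real.log x / Real.log (1+a))) * (k * (Real.log y / Real.log (1+a))) := by
          rw [hat]; field_simp
        _ ≤ _ := by gcongr
    · have h1 := near_bound H hC hS ha0 hx hy
      have hu := p1_three_upper H hs hx hy
      have sx := (hS hs hx).2.2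
      have sy := (hS hs hy).2.2
      rw [Real.sqrt_sq ha0.le] at sx sy
      rw [← hat] at hu
      have sy0 := Sm_nonneg H hs hy
      have hconv : ∀ z, 0 < Real.log z → Real.log z / Real.log (1+a) ≤
          8 * (Real.log z / Real.log (3*t)) := by
        intro z hz
        rw [← mul_div_assoc, div_le_div_iff₀ hp hT]
        nlinarith
      have ex : Real.exp m * Real.exp (-m) = 1 := by rw [← Real.exp_add]; simp
      calc p₁ t x y ≤ _ := hu
        _ ≤ (a^2)⁻¹ * (C' * (8 * (Real.log x / Real.log (3*t)))) *
            (C' * (8 * (Real.log y / Real.log (3*t)))) := by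
          have := hconv x hlx
          have := hconv y hly
          have sx' : Sm p₁ (a^2) x ≤ C' * (8 * (Real.log x / Real.log (3*t))) :=
            sx.trans (by gcongr)
          have sy' : Sm p₁ (a^2) y ≤ C' * (8 * (Real.log y / Real.log (3*t))) :=
            sy.trans (by gcongr)
          gcongr
        _ = (3*64*C'^2) * (Real.log x * Real.log y / (Real.log (3*t))^2) * t⁻¹ *
            (Real.exp m * Real.exp (-m)) := by
          rw [ex, show a^2 = t/3 by rw [hat]; ring]; field_simp; ring
        _ = (3*64*C'^2*1*Real.exp m) * (Real.log x * Real.log y / (Real.log (3*t))^2) *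
            (t⁻¹ * Real.exp (-m)) := by ring
        _ ≤ _ := by gcongr; norm_num
  refine ⟨min (3*κ*k^2) (3*64*C'^2*4*Real.exp m), 3*64*C'^2*4*Real.exp m, by positivity,
    min_le_right _ _, ?_⟩
  intro t x y ht hx hy hxy hxm hym
  obtain ⟨h1, h2⟩ := main t x y ht hx hy hxy hxm hym
  refine ⟨le_trans ?_ h1, h2⟩
  have hpk0 := pk_nonneg' ht (show 0 < x by linarith) (show 0 < y by linarith)
  have hlx := Real.log_pos hx
  have hly := Real.log_pos hy
  gcongr
  exact min_le_left _ _
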